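/- arXiv:1303.7184 — 2 statements merged into one kernel-verified Lean document; each statement's English description precedes it below -/
import Mathlib

section
/- Let ρ be a compactly supported C¹ probability density on ℝ^d, not identically zero, let p > 1, and assume ∫_{{ρ>0}} ‖∇ρ(x)‖^p ρ(x)^{1−p} dx < ∞ (with the convention ∇ρ/ρ := 0 on {ρ = 0}). For t > 0 let ρ_t = ρ ∗ g_t, where g_t(x) = (2πt)^{−d/2} exp(−‖x‖²/(2t)) is the Gaussian heat kernel. Then ρ_t is everywhere positive, satisfies the pointwise bound (‖∇ρ_t(x)‖/ρ_t(x))^p ρ_t(x) ≤ (g_t ∗ (‖∇ρ‖^p ρ^{1−p}))(x) for all x, and consequently ∫ ‖∇ρ_t‖^p ρ_t^{1−p} dx ≤ ∫_{{ρ>0}} ‖∇ρ‖^p ρ^{1−p} dx. -/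
open MeasureTheory Real Set

noncomputable section

/-- ℓ² norm of a vector in `Fin d → ℝ`. -/
def l2norm {d : ℕ} (v : Fin d → ℝ) : ℝ := Real.sqrt (∑ i, v i ^ 2)

/-- i-th partial derivative. -/
def pd {d : ℕ} (i : Fin d) (f : (Fin d → ℝ) → ℝ) (x : Fin d → ℝ) : ℝ :=
  fderiv ℝ f x (Pi.single i 1)

/-- The Gaussian heat kernel `g_t(x) = (2πt)^{-d/2} exp(-‖x‖²/(2t))` on ℝ^d. -/
def heatKernel (d : ℕ) (t : ℝ) (x : Fin d → ℝ) : ℝ :=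
  (2 * Real.pi * t) ^ (-(d : ℝ) / 2) * Real.exp (-(∑ i, x i ^ 2) / (2 * t))

lemma hk_nonneg (d : ℕ) {t : ℝ} (ht : 0 < t) (x : Fin d → ℝ) : 0 < heatKernel d t x := by
  unfold heatKernel; positivity

lemma hk_cont (d : ℕ) (t : ℝ) : Continuous (heatKernel d t) := by
  unfold heatKernel; fun_prop

lemma hk_le (d : ℕ) {t : ℝ} (ht : 0 < t) (x : Fin d → ℝ) :
    heatKernel d t x ≤ (2 * Real.pi * t) ^ (-(d : ℝ) / 2) := by
  unfold heatKernel
  have h1 : Real.exp (-(∑ i, x i ^ 2) / (2 * t)) ≤ 1 := by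
    rw [Real.exp_le_one_iff]
    apply div_nonpos_of_nonpos_of_nonneg _ (by positivity)
    have : 0 ≤ ∑ i, x i ^ 2 := Finset.sum_nonneg (fun i _ => sq_nonneg _)
    linarith
  have h2 : (0 : ℝ) ≤ (2 * Real.pi * t) ^ (-(d : ℝ) / 2) := by positivity
  nlinarith

lemma hk_integral (d : ℕ) {t : ℝ} (ht : 0 < t) : ∫ x, heatKernel d t x = 1 := by
  have h : ∀ x : Fin d → ℝ, heatKernel d t x =
      (2 * Real.pi * t) ^ (-(d : ℝ) / 2) * ∏ i, Real.exp (-(1 / (2 * t)) * x i ^ 2) := by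
    intro x
    unfold heatKernel
    rw [← Real.exp_sum, ← Finset.mul_sum]
    congr 2
    ring
  simp_rw [h]
  rw [integral_const_mul,
    integral_fintype_prod_volume_eq_pow (fun x : ℝ => Real.exp (-(1 / (2 * t)) * x ^ 2)),
    integral_gaussian]
  have h3 : Real.pi / (1 / (2 * t)) = 2 * Real.pi * t := by field_simp
  have hpos : 0 < 2 * Real.pi * t := by positivity
  rw [h3, Fintype.card_fin, Real.sqrt_eq_rpow, ← Real.rpow_natCast, ← Real.rpow_mul hpos.le,
    ← Real.rpow_add hpos]
  convert Real.rpow_zero _ using 2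
  ring

lemma hk_integrable (d : ℕ) {t : ℝ} (ht : 0 < t) : Integrable (heatKernel d t) := by
  by_contra h
  have := hk_integral d ht
  rw [integral_undef h] at this
  exact zero_ne_one this

lemma tangent_ineq {a m p : ℝ} (ha : 0 ≤ a) (hm : 0 ≤ m) (hp : 1 < p) :
    m ^ p + p * m ^ (p - 1) * (a - m) ≤ a ^ p := by
  rcases hm.eq_or_lt with rfl | hm
  · rw [Real.zero_rpow (by linarith), Real.zero_rpow (by linarith)]
    simpa using Real.rpow_nonneg ha p
  · have h := one_add_mul_self_le_rpow_one_add (s := a / m - 1) (by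
      have : 0 ≤ a / m := by positivity
      linarith) hp.le
    have e : 1 + (a / m - 1) = a / m := by ring
    rw [e, Real.div_rpow ha hm.le, le_div_iff₀ (by positivity)] at h
    refine le_trans (le_of_eq ?_) h
    rw [Real.rpow_sub_one hm.ne']
    field_simp

lemma div_rpow_mul {F r p : ℝ} (hF : 0 ≤ F) (hr : 0 < r) :
    (F / r) ^ p * r = F ^ p * r ^ (1 - p) := by
  rw [Real.div_rpow hF hr.le, Real.rpow_sub hr, Real.rpow_one]
  ring

lemma l2norm_nonneg {d : ℕ} (v : Fin d → ℝ) : 0 ≤ l2norm v := Real.sqrt_nonneg _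

lemma l2norm_sq {d : ℕ} (v : Fin d → ℝ) : l2norm v ^ 2 = ∑ i, v i ^ 2 :=
  Real.sq_sqrt (Finset.sum_nonneg (fun i _ => sq_nonneg _))

/-- `g` integrated against a vector field: norm of the integral is at most integral of norm. -/
lemma l2norm_integral_le {d : ℕ} {α : Type*} [MeasurableSpace α] {μ : Measure α}
    (g : α → ℝ) (v : Fin d → α → ℝ) (hg : ∀ y, 0 ≤ g y)
    (hv : ∀ i, Integrable (fun y => g y * v i y) μ)
    (hF : Integrable (fun y => g y * l2norm (fun i => v i y)) μ) :
    l2norm (fun i => ∫ y, g y * v i y ∂μ) ≤ ∫ y, g y * l2norm (fun i => v i y) ∂μ := by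
  set w : Fin d → ℝ := fun i => ∫ y, g y * v i y ∂μ with hw
  have hI : 0 ≤ ∫ y, g y * l2norm (fun i => v i y) ∂μ :=
    integral_nonneg (fun y => mul_nonneg (hg y) (l2norm_nonneg _))
  rcases (l2norm_nonneg w).eq_or_lt with h0 | h0
  · rw [← h0]; exact hI
  · have h1 : l2norm w ^ 2 = ∫ y, ∑ i, w i * (g y * v i y) ∂μ := by
      rw [l2norm_sq, integral_finset_sum _ (fun i _ => (hv i).const_mul _)]
      refine Finset.sum_congr rfl (fun i _ => ?_)
      rw [integral_const_mul, sq]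
    have h2 : ∫ y, ∑ i, w i * (g y * v i y) ∂μ
        ≤ ∫ y, l2norm w * (g y * l2norm (fun i => v i y)) ∂μ := by
      refine integral_mono (integrable_finset_sum _ (fun i _ => (hv i).const_mul _))
        (hF.const_mul _) (fun y => ?_)
      have := Real.sum_mul_le_sqrt_mul_sqrt Finset.univ w (fun i => v i y)
      have h3 := mul_le_mul_of_nonneg_left this (hg y)
      calc ∑ i, w i * (g y * v i y) = g y * ∑ i, w i * v i y := by
            rw [Finset.mul_sum]; exact Finset.sum_congr rfl (fun i _ => by ring)
        _ ≤ _ := h3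
        _ = _ := by unfold l2norm; ring
    rw [integral_const_mul, ← h1, sq] at h2
    exact le_of_mul_le_mul_left h2 h0

/-- Let `ρ` be a compactly supported `C¹` probability density on ℝ^d,
not identically zero, `p > 1`, with `∫_{ρ>0} ‖∇ρ‖^p ρ^{1-p} < ∞`.  For `t > 0` let
`ρ_t = ρ ∗ g_t`.  Then `ρ_t` is everywhere positive, satisfies the pointwise bound
`(‖∇ρ_t‖/ρ_t)^p ρ_t ≤ g_t ∗ (‖∇ρ‖^p ρ^{1-p})`, and consequently
`∫ ‖∇ρ_t‖^p ρ_t^{1-p} ≤ ∫_{ρ>0} ‖∇ρ‖^p ρ^{1-p}`. -/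
theorem stmt3 (d : ℕ) (ρ : (Fin d → ℝ) → ℝ)
    (hρC1 : ContDiff ℝ 1 ρ) (hρsupp : HasCompactSupport ρ)
    (hρ0 : ∀ x, 0 ≤ ρ x) (hρ1 : ∫ x, ρ x = 1) (hρne : ∃ x, ρ x ≠ 0)
    (p : ℝ) (hp : 1 < p)
    (hfin : IntegrableOn (fun x => l2norm (fun i => pd i ρ x) ^ p * ρ x ^ (1 - p))
      {x | 0 < ρ x} volume)
    (t : ℝ) (ht : 0 < t)
    (ρt : (Fin d → ℝ) → ℝ)
    (hρt : ∀ x, ρt x = ∫ y, heatKernel d t (x - y) * ρ y) :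
    (∀ x, 0 < ρt x) ∧
    (∀ x, (l2norm (fun i => pd i ρt x) / ρt x) ^ p * ρt x ≤
      ∫ y, heatKernel d t (x - y) *
        (if ρ y = 0 then 0 else l2norm (fun i => pd i ρ y) ^ p * ρ y ^ (1 - p))) ∧
    ∫ x, l2norm (fun i => pd i ρt x) ^ p * ρt x ^ (1 - p) ≤
      ∫ x in {x | 0 < ρ x}, l2norm (fun i => pd i ρ x) ^ p * ρ x ^ (1 - p) := by
  classical
  have hρc : Continuous ρ := hρC1.continuous
  have hmul : ∀ x, (∫ y, heatKernel d t (x - y) * ρ y)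
      = (convolution (heatKernel d t) ρ (ContinuousLinearMap.mul ℝ ℝ) volume) x := by
    intro x; rw [convolution_eq_swap]; rfl
  have hgc : ∀ x, Continuous (fun y => heatKernel d t (x - y)) := fun x =>
    (hk_cont d t).comp (by fun_prop)
  have hg0 : ∀ x y, 0 < heatKernel d t (x - y) := fun x y => hk_nonneg d ht _
  have hfd : Continuous (fderiv ℝ ρ) := hρC1.continuous_fderiv one_ne_zero
  have hpdc : ∀ i, Continuous (pd i ρ) := fun i => by unfold pd; fun_prop
  have hpds : ∀ i, HasCompactSupport (pd i ρ) := fun i => by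
    have := (hρsupp.fderiv ℝ).comp_left (g := fun L : (Fin d → ℝ) →L[ℝ] ℝ => L (Pi.single i 1))
      (by simp)
    exact this
  -- derivative of the convolution
  have hpdt : ∀ x i, pd i ρt x = ∫ y, heatKernel d t (x - y) * pd i ρ y := by
    intro x i
    have hρt' : ρt = convolution (heatKernel d t) ρ (ContinuousLinearMap.mul ℝ ℝ) volume := by
      funext z; rw [hρt, hmul]
    have hloc : LocallyIntegrable (heatKernel d t) volume := (hk_cont d t).locallyIntegrable
    have := hρsupp.hasFDerivAt_convolution_right (ContinuousLinearMap.mul ℝ ℝ) hloc hρC1 x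
    rw [pd, hρt', this.fderiv,
      convolution_precompR_apply _ hloc (hρsupp.fderiv ℝ) hfd, convolution_eq_swap]
    rfl
  -- gradient vanishes where ρ does
  have hgrad0 : ∀ y, ρ y = 0 → l2norm (fun i => pd i ρ y) = 0 := by
    intro y hy
    have hmin : IsLocalMin ρ y := Filter.Eventually.of_forall (fun z => by rw [hy]; exact hρ0 z)
    simp [l2norm, pd, hmin.fderiv_eq_zero]
  have hFc : Continuous (fun y => l2norm (fun i => pd i ρ y)) := by
    unfold l2norm; fun_prop
  have hFs : HasCompactSupport (fun y => l2norm (fun i => pd i ρ y)) := by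
    refine HasCompactSupport.mono hρsupp (fun y hy => ?_)
    intro h0
    exact hy (hgrad0 y h0)
  have hIρ : ∀ x, Integrable (fun y => heatKernel d t (x - y) * ρ y) := fun x =>
    ((hgc x).mul hρc).integrable_of_hasCompactSupport hρsupp.mul_left
  have hIv : ∀ x i, Integrable (fun y => heatKernel d t (x - y) * pd i ρ y) := fun x i =>
    ((hgc x).mul (hpdc i)).integrable_of_hasCompactSupport (hpds i).mul_left
  have hIF : ∀ x, Integrable (fun y => heatKernel d t (x - y) * l2norm (fun i => pd i ρ y)) :=
    fun x => ((hgc x).mul hFc).integrable_of_hasCompactSupport hFs.mul_left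
  set H : (Fin d → ℝ) → ℝ := fun y =>
    if ρ y = 0 then 0 else l2norm (fun i => pd i ρ y) ^ p * ρ y ^ (1 - p) with hH
  have hHind : H = {x | 0 < ρ x}.indicator
      (fun x => l2norm (fun i => pd i ρ x) ^ p * ρ x ^ (1 - p)) := by
    funext y
    by_cases h : ρ y = 0
    · simp [hH, h]
    · have : 0 < ρ y := lt_of_le_of_ne (hρ0 y) (Ne.symm h)
      simp [hH, h, this]
  have hms : MeasurableSet {x | 0 < ρ x} := (isOpen_lt continuous_const hρc).measurableSet
  have hHint : Integrable H := by rw [hHind]; exact hfin.integrable_indicator hms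
  have hIH : ∀ x, Integrable (fun y => heatKernel d t (x - y) * H y) := fun x =>
    hHint.bdd_mul (c := (2 * Real.pi * t) ^ (-(d : ℝ) / 2)) (hgc x).aestronglyMeasurable
      (Filter.Eventually.of_forall (fun y => by
        rw [Real.norm_of_nonneg (hg0 x y).le]; exact hk_le d ht _))
  have hpos : ∀ x, 0 < ρt x := by
    intro x
    rw [hρt]
    obtain ⟨z, hz⟩ := hρne
    exact ((hgc x).mul hρc).integral_pos_of_hasCompactSupport_nonneg_nonzero
      (x := z) hρsupp.mul_left (fun y => mul_nonneg (hg0 x y).le (hρ0 y))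
      (mul_ne_zero (hg0 x z).ne' hz)
  have hpt : ∀ x, (l2norm (fun i => pd i ρt x) / ρt x) ^ p * ρt x ≤
      ∫ y, heatKernel d t (x - y) * H y := by
    intro x
    have hN : l2norm (fun i => pd i ρt x)
        ≤ ∫ y, heatKernel d t (x - y) * l2norm (fun i => pd i ρ y) := by
      simp_rw [hpdt x]
      exact l2norm_integral_le _ _ (fun y => (hg0 x y).le) (hIv x) (hIF x)
    set m := l2norm (fun i => pd i ρt x) / ρt x with hm
    have hm0 : 0 ≤ m := div_nonneg (l2norm_nonneg _) (hpos x).le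
    have hmN : m * ρt x = l2norm (fun i => pd i ρt x) := by
      rw [hm]; field_simp [(hpos x).ne']
    have hc : 0 ≤ p * m ^ (p - 1) := mul_nonneg (by linarith) (Real.rpow_nonneg hm0 _)
    have key : ∫ y, ((m ^ p - p * m ^ (p - 1) * m) * (heatKernel d t (x - y) * ρ y)
        + p * m ^ (p - 1) * (heatKernel d t (x - y) * l2norm (fun i => pd i ρ y)))
        ≤ ∫ y, heatKernel d t (x - y) * H y := by
      refine integral_mono (((hIρ x).const_mul _).add ((hIF x).const_mul _)) (hIH x) (fun y => ?_)
      by_cases h : ρ y = 0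
      · simp [hH, h, hgrad0 y h]
      · have hy : 0 < ρ y := lt_of_le_of_ne (hρ0 y) (Ne.symm h)
        have hF0 := l2norm_nonneg (fun i => pd i ρ y)
        have h1 := tangent_ineq (a := l2norm (fun i => pd i ρ y) / ρ y) (div_nonneg hF0 hy.le) hm0 hp
        have h2 := mul_le_mul_of_nonneg_left (mul_le_mul_of_nonneg_right h1 hy.le) (hg0 x y).le
        rw [div_rpow_mul hF0 hy] at h2
        simp only [hH, h, if_false]
        refine le_trans (le_of_eq ?_) h2
        field_simp
        ring
    rw [integral_add ((hIρ x).const_mul _) ((hIF x).const_mul _), integral_const_mul,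
      integral_const_mul, ← hρt] at key
    have h3 := mul_le_mul_of_nonneg_left hN hc
    rw [← hmN] at h3
    linarith
  refine ⟨hpos, hpt, ?_⟩
  have hconv : (fun x => ∫ y, heatKernel d t (x - y) * H y)
      = convolution (heatKernel d t) H (ContinuousLinearMap.mul ℝ ℝ) volume := by
    funext x; rw [convolution_eq_swap]; rfl
  calc ∫ x, l2norm (fun i => pd i ρt x) ^ p * ρt x ^ (1 - p)
      ≤ ∫ x, ∫ y, heatKernel d t (x - y) * H y := by
        refine integral_mono_of_nonneg (Filter.Eventually.of_forall (fun x => ?_)) ?_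
          (Filter.Eventually.of_forall (fun x => ?_))
        · exact mul_nonneg (Real.rpow_nonneg (l2norm_nonneg _) _) (Real.rpow_nonneg (hpos x).le _)
        · rw [hconv]
          exact (hk_integrable d ht).integrable_convolution _ hHint
        · have := hpt x
          rw [div_rpow_mul (l2norm_nonneg _) (hpos x)] at this
          exact this
    _ = ∫ x, H x := by
        rw [hconv, integral_convolution _ (hk_integrable d ht) hHint, hk_integral d ht]
        simp
    _ = _ := by rw [hHind, integral_indicator hms]

end
end

section
/- Let S : ℝ^d → ℝ^d be a C¹ diffeomorphism, let ν be a Borel probability measure on ℝ^d and let μ = ν ∘ S^{−1} be its image under S. Let c : ℝ^d → ℝ^d be a Borel vector field with ‖c‖ ∈ L¹(μ), admitting a divergence δ = div_μ c ∈ L¹(μ). Define b(x) = (DS(x))^{−1} c(S(x)), where DS(x) is the Jacobian matrix of S at x, and assume ‖b‖ ∈ L¹(ν). Then δ ∘ S is the divergence of b with respect to ν: ∫ (δ ∘ S) ψ dν = −∫ ⟨b, ∇ψ⟩ dν for all ψ ∈ C_c^∞(ℝ^d). -/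
open MeasureTheory Real Set

noncomputable section

/-- Test functions on ℝ^d. -/
def IsTest {d : ℕ} (φ : (Fin d → ℝ) → ℝ) : Prop :=
  ContDiff ℝ (⊤ : ℕ∞) φ ∧ HasCompactSupport φ

/-- `δ` is the divergence of `v` with respect to `m`. -/
def HasDivergence {d : ℕ} (m : Measure (Fin d → ℝ)) (v : (Fin d → ℝ) → Fin d → ℝ)
    (δ : (Fin d → ℝ) → ℝ) : Prop :=
  Integrable δ m ∧ ∀ φ : (Fin d → ℝ) → ℝ, IsTest φ →
    ∫ x, δ x * φ x ∂m = - ∫ x, ∑ i, v x i * pd i φ x ∂m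

lemma sum_pd {d : ℕ} (f : (Fin d → ℝ) → ℝ) (x v : Fin d → ℝ) :
    ∑ i, v i * pd i f x = fderiv ℝ f x v := by
  conv_rhs => rw [pi_eq_sum_univ' v, map_sum]
  refine Finset.sum_congr rfl fun i _ => ?_
  rw [map_smul, smul_eq_mul, pd]

lemma norm_le_l2norm {d : ℕ} (v : Fin d → ℝ) : ‖v‖ ≤ l2norm v := by
  refine (pi_norm_le_iff_of_nonneg (Real.sqrt_nonneg _)).2 fun i => ?_
  rw [Real.norm_eq_abs]
  refine Real.abs_le_sqrt ?_
  exact Finset.single_le_sum (f := fun i => v i ^ 2) (fun j _ => sq_nonneg _) (Finset.mem_univ i)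

def bmp (d : ℕ) (n : ℕ) : ContDiffBump (0 : Fin d → ℝ) where
  rIn := 1 / ((n : ℝ) + 1)
  rOut := 2 / ((n : ℝ) + 1)
  rIn_pos := by positivity
  rIn_lt_rOut := by gcongr; norm_num

open Convolution ContinuousLinearMap in
lemma conv_tendsto {d : ℕ} {F : Type*} [NormedAddCommGroup F] [NormedSpace ℝ F] [CompleteSpace F]
    (g : (Fin d → ℝ) → F) (hg : Continuous g) (x : Fin d → ℝ) :
    Filter.Tendsto (fun n => ((bmp d n).normed volume ⋆[lsmul ℝ ℝ, volume] g) x)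
      Filter.atTop (nhds (g x)) := by
  refine ContDiffBump.convolution_tendsto_right_of_continuous ?_ hg x
  have := (tendsto_one_div_add_atTop_nhds_zero_nat (𝕜 := ℝ)).const_mul 2
  simpa [bmp, div_eq_mul_inv] using this

open Convolution ContinuousLinearMap in
lemma conv_bound {d : ℕ} {F : Type*} [NormedAddCommGroup F] [NormedSpace ℝ F] [CompleteSpace F]
    (g : (Fin d → ℝ) → F) (hg : Continuous g) (M : ℝ) (hM : ∀ x, ‖g x‖ ≤ M) (n : ℕ)
    (x : Fin d → ℝ) :
    ‖((bmp d n).normed volume ⋆[lsmul ℝ ℝ, volume] g) x‖ ≤ 3 * M := by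
  have h := (bmp d n).dist_normed_convolution_le (μ := volume) (g := g) (x₀ := x) (ε := 2 * M)
    hg.aestronglyMeasurable (fun y _ => by
      rw [dist_eq_norm]
      have := norm_sub_le (g y) (g x)
      linarith [hM x, hM y])
  rw [dist_eq_norm] at h
  have h2 := norm_le_norm_add_norm_sub' (((bmp d n).normed volume ⋆[lsmul ℝ ℝ, volume] g) x) (g x)
  linarith [hM x]

open Convolution ContinuousLinearMap in
lemma conv_fderiv {d : ℕ} (φ : (Fin d → ℝ) → ℝ) (h1 : ContDiff ℝ 1 φ) (h2 : HasCompactSupport φ)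
    (n : ℕ) (x : Fin d → ℝ) :
    fderiv ℝ ((bmp d n).normed volume ⋆[lsmul ℝ ℝ, volume] φ) x =
      ((bmp d n).normed volume ⋆[lsmul ℝ ℝ, volume] (fderiv ℝ φ)) x := by
  have hli : LocallyIntegrable ((bmp d n).normed volume) volume :=
    (bmp d n).continuous_normed.locallyIntegrable
  rw [(h2.hasFDerivAt_convolution_right (lsmul ℝ ℝ) hli h1 x).fderiv]
  rfl

open Convolution ContinuousLinearMap in
lemma conv_test {d : ℕ} (φ : (Fin d → ℝ) → ℝ) (h1 : ContDiff ℝ 1 φ) (h2 : HasCompactSupport φ)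
    (n : ℕ) : IsTest ((bmp d n).normed volume ⋆[lsmul ℝ ℝ, volume] φ) :=
  ⟨(bmp d n).hasCompactSupport_normed.contDiff_convolution_left _ (bmp d n).contDiff_normed
      h1.continuous.locallyIntegrable,
    HasCompactSupport.convolution _ (bmp d n).hasCompactSupport_normed h2⟩

open Convolution ContinuousLinearMap in
lemma div_C1 {d : ℕ} (μ : Measure (Fin d → ℝ)) (c : (Fin d → ℝ) → Fin d → ℝ)
    (hcmeas : Measurable c) (hcL1 : Integrable (fun x => l2norm (c x)) μ)
    (δ : (Fin d → ℝ) → ℝ) (hδ : HasDivergence μ c δ)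
    (φ : (Fin d → ℝ) → ℝ) (h1 : ContDiff ℝ 1 φ) (h2 : HasCompactSupport φ) :
    ∫ x, δ x * φ x ∂μ = - ∫ x, fderiv ℝ φ x (c x) ∂μ := by
  have hc' : Continuous (fderiv ℝ φ) := h1.continuous_fderiv one_ne_zero
  obtain ⟨M, hM⟩ := h2.exists_bound_of_continuous h1.continuous
  obtain ⟨M', hM'⟩ := (h2.fderiv (𝕜 := ℝ)).exists_bound_of_continuous hc'
  have key : ∀ n, ∫ x, δ x * ((bmp d n).normed volume ⋆[lsmul ℝ ℝ, volume] φ) x ∂μ =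
      - ∫ x, fderiv ℝ ((bmp d n).normed volume ⋆[lsmul ℝ ℝ, volume] φ) x (c x) ∂μ := by
    intro n
    rw [hδ.2 _ (conv_test φ h1 h2 n)]
    simp only [sum_pd]
  have t1 : Filter.Tendsto
      (fun n => ∫ x, δ x * ((bmp d n).normed volume ⋆[lsmul ℝ ℝ, volume] φ) x ∂μ)
      Filter.atTop (nhds (∫ x, δ x * φ x ∂μ)) := by
    refine tendsto_integral_of_dominated_convergence (fun x => ‖δ x‖ * (3 * M)) ?_ ?_ ?_ ?_
    · intro n
      exact hδ.1.aestronglyMeasurable.mul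
        (conv_test φ h1 h2 n).1.continuous.aestronglyMeasurable
    · exact hδ.1.norm.mul_const _
    · intro n
      refine Filter.Eventually.of_forall fun x => ?_
      rw [norm_mul]
      exact mul_le_mul_of_nonneg_left (conv_bound φ h1.continuous M hM n x) (norm_nonneg _)
    · exact Filter.Eventually.of_forall fun x => (conv_tendsto φ h1.continuous x).const_mul _
  have t2 : Filter.Tendsto
      (fun n => ∫ x, fderiv ℝ ((bmp d n).normed volume ⋆[lsmul ℝ ℝ, volume] φ) x (c x) ∂μ)
      Filter.atTop (nhds (∫ x, fderiv ℝ φ x (c x) ∂μ)) := by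
    refine tendsto_integral_of_dominated_convergence (fun x => (3 * M') * l2norm (c x)) ?_ ?_ ?_ ?_
    · intro n
      have hm : Measurable (fun x =>
          fderiv ℝ ((bmp d n).normed volume ⋆[lsmul ℝ ℝ, volume] φ) x (c x)) := by
        simp only [← sum_pd]
        refine Finset.measurable_sum _ fun i _ => ?_
        exact ((measurable_pi_apply i).comp hcmeas).mul (measurable_fderiv_apply_const ℝ _ _)
      exact hm.aestronglyMeasurable
    · exact hcL1.const_mul _
    · intro n
      refine Filter.Eventually.of_forall fun x => ?_
      refine (le_opNorm _ _).trans ?_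
      rw [conv_fderiv φ h1 h2]
      have hb := conv_bound _ hc' M' hM' n x
      exact mul_le_mul hb (norm_le_l2norm _) (norm_nonneg _) ((norm_nonneg _).trans hb)
    · refine Filter.Eventually.of_forall fun x => ?_
      simp only [conv_fderiv φ h1 h2]
      exact ((ContinuousLinearMap.apply ℝ ℝ (c x)).continuous.tendsto _).comp
        (conv_tendsto _ hc' x)
  simp only [key] at t1
  exact tendsto_nhds_unique t1 t2.neg

/-- Let `S : ℝ^d → ℝ^d` be a `C¹` diffeomorphism, `ν` a Borel
probability measure and `μ = ν ∘ S⁻¹`. Let `c` be a Borel vector field with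
`‖c‖ ∈ L¹(μ)` admitting a divergence `δ = div_μ c ∈ L¹(μ)`. If
`b(x) = (DS(x))⁻¹ c(S(x))` with `‖b‖ ∈ L¹(ν)`, then `δ ∘ S` is the divergence of `b`
with respect to `ν`. -/
theorem stmt12 (d : ℕ) (S Sinv : (Fin d → ℝ) → Fin d → ℝ)
    (hS : ContDiff ℝ 1 S) (hSinv : ContDiff ℝ 1 Sinv)
    (hleft : Function.LeftInverse Sinv S) (hright : Function.RightInverse Sinv S)
    (ν : Measure (Fin d → ℝ)) (hνP : IsProbabilityMeasure ν)
    (μ : Measure (Fin d → ℝ)) (hμ : μ = ν.map S)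
    (c : (Fin d → ℝ) → Fin d → ℝ) (hcmeas : Measurable c)
    (hcL1 : Integrable (fun x => l2norm (c x)) μ)
    (δ : (Fin d → ℝ) → ℝ) (hδ : HasDivergence μ c δ)
    (b : (Fin d → ℝ) → Fin d → ℝ)
    (hb : ∀ x, fderiv ℝ S x (b x) = c (S x))
    (hbL1 : Integrable (fun x => l2norm (b x)) ν) :
    HasDivergence ν b (fun x => δ (S x)) := by
  let e : (Fin d → ℝ) ≃ₜ (Fin d → ℝ) :=
    { toFun := S, invFun := Sinv, left_inv := hleft, right_inv := hright,
      continuous_toFun := hS.continuous, continuous_invFun := hSinv.continuous }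
  have hemb : MeasurableEmbedding S := e.measurableEmbedding
  refine ⟨?_, fun ψ hψ => ?_⟩
  · have := hδ.1
    rw [hμ] at this
    exact hemb.integrable_map_iff.1 this
  have h1 : ContDiff ℝ 1 (ψ ∘ Sinv) := (hψ.1.of_le (by exact_mod_cast le_top)).comp hSinv
  have h2 : HasCompactSupport (ψ ∘ Sinv) := hψ.2.comp_homeomorph e.symm
  have key := div_C1 μ c hcmeas hcL1 δ hδ _ h1 h2
  rw [hμ, hemb.integral_map, hemb.integral_map] at key
  simp only [sum_pd]
  have e1 : ∀ x, (ψ ∘ Sinv) (S x) = ψ x := fun x => by simp [hleft x]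
  have e2 : ∀ x, fderiv ℝ (ψ ∘ Sinv) (S x) (c (S x)) = fderiv ℝ ψ x (b x) := by
    intro x
    have hcomp : (ψ ∘ Sinv) ∘ S = ψ := funext e1
    have := fderiv_comp x (h1.differentiable one_ne_zero (S x)) (hS.differentiable one_ne_zero x)
    rw [hcomp] at this
    rw [this, ← hb x]
    rfl
  simpa only [e1, e2] using key

end
end
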